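/- Let f : ℝ^{m-1} × ℝ^m → ℝ be continuous and bounded on ℝ^{m-1} × (closed unit ball), such that for each x′ ∈ ℝ^{m-1} the function u ↦ f(x′,u) coincides on the closed unit ball with an element of ℋ_k. Then for every a ∈ ℝ^{m-1} and every v ∈ 𝔹^m, P_H[f](x,v) → f(a,v) as x → (a,0) with x ∈ ℝ^m_+. Consequently, the function g on the closed upper half-space defined by g(x,v) = P_H[f](x,v) for x ∈ ℝ^m_+ and g((x′,0),v) = f(x′,v) is continuous in the x-variable on the closed upper half-space, for each fixed v ∈ 𝔹^m. -/

import Mathlib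

noncomputable section

open MeasureTheory Metric Filter Topology
open scoped RealInnerProductSpace

/-- `ℝ^m` as a Euclidean space. -/
abbrev Evec (m : ℕ) : Type := EuclideanSpace ℝ (Fin m)

/-- Partial derivative in the `i`-th coordinate direction. -/
def pdv {m : ℕ} (i : Fin m) (f : Evec m → ℝ) (x : Evec m) : ℝ :=
  fderiv ℝ f x (EuclideanSpace.single i 1)

/-- Euclidean Laplacian on `ℝ^m`. -/
def lapl {m : ℕ} (f : Evec m → ℝ) (x : Evec m) : ℝ :=
  ∑ i : Fin m, pdv i (pdv i f) x

/-- `p` is a real-valued polynomial function on `ℝ^m`, homogeneous of degree `k` and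
harmonic; i.e. `p ∈ ℋ_k`. -/
def IsHk (m k : ℕ) (p : Evec m → ℝ) : Prop :=
  (∃ P : MvPolynomial (Fin m) ℝ, ∀ x : Evec m, p x = MvPolynomial.eval (fun i => x i) P) ∧
  (∀ (c : ℝ) (x : Evec m), p (c • x) = c ^ k * p x) ∧
  (∀ x : Evec m, lapl p x = 0)

/-- The surface measure `dS` on the unit sphere `𝕊^{m-1}`, as a measure on `ℝ^m`. -/
def sphereM (m : ℕ) : Measure (Evec m) :=
  Measure.map Subtype.val ((volume : Measure (Evec m)).toSphere)

/-- `ω_m`, the surface area of the unit sphere `𝕊^{m-1}`. -/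
def omegaS (m : ℕ) : ℝ := (sphereM m Set.univ).toReal

/-- The constant `c_{m,k} = 2(m+2k-2)/((m-2)ω_m)`. -/
def cmk (m k : ℕ) : ℝ := 2 * ((m : ℝ) + 2 * k - 2) / (((m : ℝ) - 2) * omegaS m)

/-- The reflection `R_a(u) = u - 2⟨a,u⟩a/|a|²` (in Clifford notation `a u a/|a|²`). -/
def reflv {m : ℕ} (a u : Evec m) : Evec m :=
  u - (2 * ⟪a, u⟫ / ‖a‖ ^ 2) • a

/-- `dim ℋ_k`. -/
def hdim (m k : ℕ) : ℕ :=
  Nat.choose (m + k - 1) (m - 1) - Nat.choose (m + k - 3) (m - 1)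

/-- `Z` is the reproducing kernel `Z_k` of `ℋ_k` on the unit sphere: a symmetric,
rotation invariant kernel, bounded by `dim ℋ_k` on the unit ball, belonging to `ℋ_k`
in the first variable and reproducing elements of `ℋ_k` from their spherical values. -/
def IsZk (m k : ℕ) (Z : Evec m → Evec m → ℝ) : Prop :=
  (∀ v : Evec m, IsHk m k (fun u => Z u v)) ∧
  (∀ p : Evec m → ℝ, IsHk m k p → ∀ v : Evec m, (∫ u, Z u v * p u ∂(sphereM m)) = p v) ∧
  (∀ u v : Evec m, Z u v = Z v u) ∧
  (∀ u v : Evec m, ‖u‖ ≤ 1 → ‖v‖ ≤ 1 → |Z u v| ≤ (hdim m k : ℝ)) ∧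
  (∀ (A : Evec m ≃ₗᵢ[ℝ] Evec m) (u v : Evec m), Z (A u) (A v) = Z u v)

/-- The point `(x', y) ∈ ℝ^{d+1}` with first `d` coordinates `x'` and last coordinate `y`. -/
def upP (d : ℕ) (x' : Evec d) (y : ℝ) : Evec (d + 1) :=
  (EuclideanSpace.equiv (Fin (d + 1)) ℝ).symm
    (Fin.snoc (⇑(EuclideanSpace.equiv (Fin d) ℝ) x') y)

/-- The first `d` coordinates of a point of `ℝ^{d+1}`. -/
def downP (d : ℕ) (x : Evec (d + 1)) : Evec d :=
  (EuclideanSpace.equiv (Fin d) ℝ).symm (fun i => x (Fin.castSucc i))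

/-- The last coordinate of a point of `ℝ^{d+1}`. -/
def lastP (d : ℕ) (x : Evec (d + 1)) : ℝ := x (Fin.last d)

/-- The Poisson kernel `P_H` for bosonic Laplacians in the upper half-space `ℝ^{d+1}_+`,
`P_H(x,t,u,v) = c_{m,k} (y/|x-t|^m) Z_k(R_{x-t}(u), v)` with `m = d+1`, `x = (x',y)`,
`t = (t',0)`. -/
def PH (d k : ℕ) (Z : Evec (d + 1) → Evec (d + 1) → ℝ) (x' : Evec d) (y : ℝ)
    (t' : Evec d) (u v : Evec (d + 1)) : ℝ :=
  cmk (d + 1) k * (y / ‖upP d x' y - upP d t' 0‖ ^ (d + 1)) *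
    Z (reflv (upP d x' y - upP d t' 0) u) v

/-- The Poisson integral `P_H[f]` in the upper half-space. -/
def PHint (d k : ℕ) (Z : Evec (d + 1) → Evec (d + 1) → ℝ)
    (f : Evec d → Evec (d + 1) → ℝ) (x' : Evec d) (y : ℝ) (v : Evec (d + 1)) : ℝ :=
  ∫ t' : Evec d, (∫ u, PH d k Z x' y t' u v * f t' u ∂(sphereM (d + 1)))

/-- The Poisson kernel `P_B` for bosonic Laplacians in the unit ball. -/
def PB (m k : ℕ) (Z : Evec m → Evec m → ℝ) (x ζ ω ν : Evec m) : ℝ :=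
  (cmk m k / 2) * ((1 - ‖x‖ ^ 2) / ‖x - ζ‖ ^ m) * Z (reflv (x - ζ) ω) ν

/-- The Poisson integral `P_B[h]` in the unit ball. -/
def PBint (m k : ℕ) (Z : Evec m → Evec m → ℝ) (h : Evec m → Evec m → ℝ)
    (x ν : Evec m) : ℝ :=
  ∫ ζ, (∫ ω, PB m k Z x ζ ω ν * h ζ ω ∂(sphereM m)) ∂(sphereM m)

/-- Partial derivative in the first (`x`) variable. -/
def pd1 {m : ℕ} (i : Fin m) (f : Evec m → Evec m → ℝ) : Evec m → Evec m → ℝ :=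
  fun x u => fderiv ℝ (fun x₁ => f x₁ u) x (EuclideanSpace.single i 1)

/-- Partial derivative in the second (`u`) variable. -/
def pd2 {m : ℕ} (i : Fin m) (f : Evec m → Evec m → ℝ) : Evec m → Evec m → ℝ :=
  fun x u => fderiv ℝ (fun u₁ => f x u₁) u (EuclideanSpace.single i 1)

/-- The bosonic Laplacian `𝒟_k`. -/
def Dk (m k : ℕ) (f : Evec m → Evec m → ℝ) : Evec m → Evec m → ℝ := fun x u =>
  (∑ i : Fin m, pd1 i (pd1 i f) x u)
    - (4 / ((m : ℝ) + 2 * k - 2)) *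
        ∑ i : Fin m, ∑ j : Fin m, u i * pd1 i (pd2 j (pd1 j f)) x u
    + (4 * ‖u‖ ^ 2 / (((m : ℝ) + 2 * k - 2) * ((m : ℝ) + 2 * k - 4))) *
        ∑ i : Fin m, ∑ j : Fin m, pd2 i (pd1 i (pd2 j (pd1 j f))) x u

/-- `f ∈ C²(Ω×𝔹^m, ℋ_k)`: twice continuously differentiable on `Ω × 𝔹^m` and, for each
fixed `x ∈ Ω`, coinciding in the second variable with an element of `ℋ_k`. -/
def C2Hk (m k : ℕ) (Ω : Set (Evec m)) (f : Evec m → Evec m → ℝ) : Prop :=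
  ContDiffOn ℝ 2 (fun q : Evec m × Evec m => f q.1 q.2) (Ω ×ˢ ball (0 : Evec m) 1) ∧
  ∀ x ∈ Ω, ∃ q, IsHk m k q ∧ ∀ u ∈ closedBall (0 : Evec m) 1, f x u = q u

/-- The `L^p` norm `(∫_{ℝ^{m-1}} ∫_{𝕊^{m-1}} |f(x',u)|^p dS(u) dx')^{1/p}` (`m = d+1`),
valued in `ℝ≥0∞`. -/
def lpH (d : ℕ) (p : ℝ) (f : Evec d → Evec (d + 1) → ℝ) : ENNReal :=
  (∫⁻ x' : Evec d, ∫⁻ u, ENNReal.ofReal (|f x' u| ^ p) ∂(sphereM (d + 1))) ^ (1 / p)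

/-- `f ∈ L^p(ℝ^{m-1}×𝔹^m, ℋ_k)` (`m = d+1`). -/
def MemLpH (d k : ℕ) (p : ℝ) (f : Evec d → Evec (d + 1) → ℝ) : Prop :=
  Measurable (fun q : Evec d × Evec (d + 1) => f q.1 q.2) ∧
  (∀ x' : Evec d, ∃ q, IsHk (d + 1) k q ∧
    ∀ u ∈ closedBall (0 : Evec (d + 1)) 1, f x' u = q u) ∧
  lpH d p f < ⊤

/-- The `L^p` norm `(∫_{𝕊^{m-1}} ∫_{𝕊^{m-1}} |h(ζ,ω)|^p dS(ω) dS(ζ))^{1/p}`,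
valued in `ℝ≥0∞`. -/
def lpS (m : ℕ) (p : ℝ) (h : Evec m → Evec m → ℝ) : ENNReal :=
  (∫⁻ ζ, ∫⁻ ω, ENNReal.ofReal (|h ζ ω| ^ p) ∂(sphereM m) ∂(sphereM m)) ^ (1 / p)

/-- `h ∈ L^p(𝕊^{m-1}×𝔹^m, ℋ_k)`. -/
def MemLpS (m k : ℕ) (p : ℝ) (h : Evec m → Evec m → ℝ) : Prop :=
  Measurable (fun q : Evec m × Evec m => h q.1 q.2) ∧
  (∀ ζ : Evec m, ‖ζ‖ = 1 → ∃ q, IsHk m k q ∧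
    ∀ ω ∈ closedBall (0 : Evec m) 1, h ζ ω = q ω) ∧
  lpS m p h < ⊤

/-- Iterated partial derivative `D_x^α` in the first variable, for a multi-index `α ∈ ℕ^m`. -/
def Dx {m : ℕ} (α : Fin m → ℕ) (f : Evec m → Evec m → ℝ) : Evec m → Evec m → ℝ :=
  (List.finRange m).foldr (fun i g => (pd1 i)^[α i] g) f

/-- Iterated partial derivative `D_ν^β` in the second variable, for a multi-index `β ∈ ℕ^m`. -/
def Dv {m : ℕ} (β : Fin m → ℕ) (f : Evec m → Evec m → ℝ) : Evec m → Evec m → ℝ :=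
  (List.finRange m).foldr (fun i g => (pd2 i)^[β i] g) f

lemma integral_sphereM {m : ℕ} (g : Evec m → ℝ) :
    ∫ u, g u ∂(sphereM m) = ∫ u : sphere (0 : Evec m) 1, g u ∂(volume : Measure (Evec m)).toSphere :=
  (MeasurableEmbedding.subtype_coe isClosed_sphere.measurableSet).integral_map g

lemma ae_sphereM (m : ℕ) : ∀ᵐ u ∂(sphereM m), ‖u‖ = 1 := by
  rw [sphereM, (MeasurableEmbedding.subtype_coe isClosed_sphere.measurableSet).ae_map_iff]
  exact ae_of_all _ fun u => by simp

instance (m : ℕ) : IsFiniteMeasure (sphereM m) := by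
  unfold sphereM; infer_instance

lemma omegaS_pos {m : ℕ} (hm : 1 ≤ m) : 0 < omegaS m := by
  have : Nonempty (Fin m) := ⟨⟨0, hm⟩⟩
  have h : sphereM m Set.univ = (volume : Measure (Evec m)).toSphere Set.univ := by
    rw [sphereM, Measure.map_apply measurable_subtype_coe MeasurableSet.univ, Set.preimage_univ]
  rw [omegaS, h]
  refine ENNReal.toReal_pos ?_ (measure_ne_top _ _)
  rw [Ne, Measure.measure_univ_eq_zero]
  exact Measure.toSphere_ne_zero _

lemma integrable_sphereM {m : ℕ} {g : Evec m → ℝ} (hg : Continuous g) :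
    Integrable g (sphereM m) := by
  rw [sphereM, (MeasurableEmbedding.subtype_coe
    isClosed_sphere.measurableSet).integrable_map_iff]
  exact (hg.comp continuous_subtype_val).integrable_of_hasCompactSupport
    (HasCompactSupport.of_compactSpace _)

/-- The radial Gaussian moment `∫₀^∞ r^n exp(-r²) dr`. -/
def gaussMoment (n : ℕ) : ℝ := ∫ r in Set.Ioi (0 : ℝ), r ^ n * Real.exp (-r ^ 2)

lemma gaussMoment_eq (n : ℕ) : gaussMoment n = Real.Gamma (((n : ℝ) + 1) / 2) / 2 := by
  have h := integral_rpow_mul_exp_neg_mul_rpow (p := 2) (q := n) (b := 1) two_pos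
    (by have : (0 : ℝ) ≤ n := n.cast_nonneg
        linarith) one_pos
  rw [gaussMoment]
  convert h using 1
  · refine setIntegral_congr_fun measurableSet_Ioi fun r _ => ?_
    simp
  · simp; ring

lemma gaussMoment_pos (n : ℕ) : 0 < gaussMoment n := by
  rw [gaussMoment_eq]
  have := Real.Gamma_pos_of_pos (s := ((n : ℝ) + 1) / 2) (by positivity)
  positivity

lemma gaussMoment_add_two (n : ℕ) :
    2 * gaussMoment (n + 2) = ((n : ℝ) + 1) * gaussMoment n := by
  rw [gaussMoment_eq, gaussMoment_eq]
  have h : (((n + 2 : ℕ) : ℝ) + 1) / 2 = ((n : ℝ) + 1) / 2 + 1 := by push_cast; ring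
  rw [h, Real.Gamma_add_one (by positivity)]
  ring

lemma gaussMoment_scale (n : ℕ) {b : ℝ} (hb : 0 < b) :
    ∫ r in Set.Ioi (0 : ℝ), r ^ n * Real.exp (-(r ^ 2 * b)) =
      b ^ (-((n : ℝ) + 1) / 2) * gaussMoment n := by
  have h := integral_rpow_mul_exp_neg_mul_rpow (p := 2) (q := n) (b := b) two_pos
    (by have : (0 : ℝ) ≤ n := n.cast_nonneg
        linarith) hb
  rw [gaussMoment_eq]
  convert h using 1
  · refine setIntegral_congr_fun measurableSet_Ioi fun r _ => ?_
    simp [mul_comm]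
  · ring

/-- Polar coordinates for a positively homogeneous function against the Gaussian weight. -/
lemma integral_homogeneous_mul_gauss {m : ℕ} (hm : 1 ≤ m) {H : Evec m → ℝ} {n : ℕ}
    (hH : ∀ (r : ℝ) (x : Evec m), 0 < r → H (r • x) = r ^ n * H x) :
    ∫ x, H x * Real.exp (-‖x‖ ^ 2) =
      (∫ u, H u ∂(sphereM m)) * gaussMoment (m - 1 + n) := by
  rw [integral_sphereM]
  have : Nonempty (Fin m) := ⟨⟨0, hm⟩⟩
  calc ∫ x, H x * Real.exp (-‖x‖ ^ 2)
      = ∫ x : ({(0)}ᶜ : Set (Evec m)), H x.1 * Real.exp (-‖x.1‖ ^ 2)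
          ∂((volume : Measure (Evec m)).comap (↑)) := by
        rw [integral_subtype_comap (measurableSet_singleton _).compl
          fun x => H x * Real.exp (-‖x‖ ^ 2), restrict_compl_singleton]
    _ = ∫ z : sphere (0 : Evec m) 1 × Set.Ioi (0 : ℝ),
          H z.1 * ((z.2 : ℝ) ^ n * Real.exp (-(z.2 : ℝ) ^ 2))
          ∂((volume : Measure (Evec m)).toSphere.prod (.volumeIoiPow (m - 1))) := by
        have h := (volume : Measure (Evec m)).measurePreserving_homeomorphUnitSphereProd
        rw [finrank_euclideanSpace_fin] at h
        rw [← h.integral_comp (Homeomorph.measurableEmbedding _)]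
        refine integral_congr_ae (ae_of_all _ fun x => ?_)
        have hx : 0 < ‖x.1‖ := norm_pos_iff.2 x.2
        have h2 := hH ‖x.1‖ (‖x.1‖⁻¹ • x.1) hx
        rw [smul_inv_smul₀ hx.ne'] at h2
        simp only [homeomorphUnitSphereProd_apply_snd_coe, homeomorphUnitSphereProd_apply_fst_coe]
        rw [h2]; ring
    _ = _ := by
        rw [integral_prod_mul (fun u : sphere (0 : Evec m) 1 => H u)
          (fun r : Set.Ioi (0 : ℝ) => (r : ℝ) ^ n * Real.exp (-(r : ℝ) ^ 2))]
        congr 1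
        rw [gaussMoment, Measure.volumeIoiPow,
          integral_withDensity_eq_integral_toReal_smul (by fun_prop) (by simp),
          ← integral_subtype_comap measurableSet_Ioi
            (fun r : ℝ => r ^ (m - 1 + n) * Real.exp (-r ^ 2))]
        refine integral_congr_ae (ae_of_all _ fun r => ?_)
        have hr : (0 : ℝ) < r := r.2
        simp only [smul_eq_mul]
        rw [ENNReal.toReal_ofReal (by positivity), pow_add]
        ring

section PolynomialIntegrals

open MvPolynomial

variable {m : ℕ}

lemma continuous_eval_evec (P : MvPolynomial (Fin m) ℝ) :
    Continuous fun x : Evec m => eval (fun i => x i) P :=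
  (MvPolynomial.continuous_eval P).comp (by fun_prop)

lemma hasFDerivAt_eval (P : MvPolynomial (Fin m) ℝ) (x : Evec m) :
    HasFDerivAt (fun y : Evec m => eval (fun i => y i) P)
      (∑ i, eval (fun j => x j) (pderiv i P) • (EuclideanSpace.proj i : Evec m →L[ℝ] ℝ)) x := by
  induction P using MvPolynomial.induction_on with
  | C a => simpa using hasFDerivAt_const a x
  | add p q hp hq =>
    simp only [map_add]
    refine (hp.add hq).congr_fderiv ?_
    simp [add_smul, Finset.sum_add_distrib]
  | mul_X p j hp =>
    have hX : HasFDerivAt (fun y : Evec m => y j) (EuclideanSpace.proj j : Evec m →L[ℝ] ℝ) x :=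
      (EuclideanSpace.proj j : Evec m →L[ℝ] ℝ).hasFDerivAt
    simp only [map_mul, eval_X]
    refine (hp.mul hX).congr_fderiv ?_
    ext y
    simp [pderiv_X, Pi.single_apply, add_mul, Finset.sum_add_distrib, Finset.mul_sum, mul_assoc,
      apply_ite]

lemma pdv_eval (i : Fin m) (P : MvPolynomial (Fin m) ℝ) :
    pdv i (fun x : Evec m => eval (fun j => x j) P) =
      fun x : Evec m => eval (fun j => x j) (pderiv i P) := by
  ext x
  rw [pdv, (hasFDerivAt_eval P x).fderiv]
  simp

/-- The formal Laplacian of a polynomial. -/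
def polyLaplacian (P : MvPolynomial (Fin m) ℝ) : MvPolynomial (Fin m) ℝ :=
  ∑ i, pderiv i (pderiv i P)

lemma lapl_eval (P : MvPolynomial (Fin m) ℝ) (x : Evec m) :
    lapl (fun x : Evec m => eval (fun j => x j) P) x = eval (fun j => x j) (polyLaplacian P) := by
  simp [lapl, polyLaplacian, pdv_eval]

lemma polyLaplacian_eq_zero {P : MvPolynomial (Fin m) ℝ}
    (h : ∀ x : Evec m, lapl (fun x : Evec m => eval (fun j => x j) P) x = 0) :
    polyLaplacian P = 0 := by
  refine MvPolynomial.funext fun x => ?_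
  have := h (WithLp.toLp 2 x)
  rw [lapl_eval] at this
  simpa using this

lemma polyLaplacian_homogeneousComponent {P : MvPolynomial (Fin m) ℝ}
    (h : polyLaplacian P = 0) (n : ℕ) : polyLaplacian (homogeneousComponent n P) = 0 := by
  ext e
  have he := congrArg (coeff e) h
  simp only [polyLaplacian, coeff_sum, coeff_pderiv, coeff_homogeneousComponent,
    coeff_zero, map_add, Finsupp.degree_single] at he ⊢
  by_cases hn : e.degree + 1 + 1 = n
  · simpa [hn] using he
  · simp [hn]

lemma polyLaplacian_pderiv {P : MvPolynomial (Fin m) ℝ} (h : polyLaplacian P = 0) (i : Fin m) :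
    polyLaplacian (pderiv i P) = 0 := by
  have hc : ∀ (a b : Fin m) (Q : MvPolynomial (Fin m) ℝ),
      pderiv a (pderiv b Q) = pderiv b (pderiv a Q) := fun a b Q => by
    ext e
    simp only [coeff_pderiv]
    rcases eq_or_ne a b with rfl | hab
    · rfl
    · simp [add_right_comm, hab, hab.symm]; ring
  have := congrArg (pderiv i) h
  simp only [polyLaplacian, map_sum, map_zero] at this ⊢
  rw [← this]
  refine Finset.sum_congr rfl fun a _ => ?_
  rw [hc a i P, hc a i]

lemma polyLaplacian_translate {P : MvPolynomial (Fin m) ℝ} (h : polyLaplacian P = 0)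
    (v : Evec m) : polyLaplacian (aeval (fun i => X i + C (v i)) P) = 0 := by
  have hd : ∀ (i : Fin m) (Q : MvPolynomial (Fin m) ℝ),
      pderiv i (aeval (fun i => X i + C (v i)) Q : MvPolynomial (Fin m) ℝ) =
        aeval (fun i => X i + C (v i)) (pderiv i Q) := fun i Q => by
    induction Q using MvPolynomial.induction_on with
    | C a => simp
    | add p q hp hq => simp only [map_add, hp, hq]
    | mul_X p j hp =>
      simp only [map_mul, aeval_X, pderiv_mul, hp, map_add, pderiv_X, pderiv_C, add_zero]
      rcases eq_or_ne i j with rfl | hij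
      · simp
      · simp [hij]
  simp only [polyLaplacian, hd, ← map_sum] at h ⊢
  simp [h]

lemma integrable_norm_pow_mul_gauss (hm : 1 ≤ m) (n : ℕ) :
    Integrable fun x : Evec m => ‖x‖ ^ n * Real.exp (-‖x‖ ^ 2) := by
  have : Nonempty (Fin m) := ⟨⟨0, hm⟩⟩
  rw [integrable_fun_norm_addHaar (μ := (volume : Measure (Evec m)))
    (f := fun r => r ^ n * Real.exp (-r ^ 2))]
  have h := integrableOn_rpow_mul_exp_neg_mul_sq (b := 1) one_pos (s := ((m - 1 + n : ℕ) : ℝ))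
    (by have : (0 : ℝ) ≤ ((m - 1 + n : ℕ) : ℝ) := Nat.cast_nonneg _
        linarith)
  refine h.congr_fun (fun r _ => ?_) measurableSet_Ioi
  simp only [Real.rpow_natCast, finrank_euclideanSpace_fin, smul_eq_mul, pow_add, neg_one_mul]
  ring

lemma integrable_eval_mul_gauss (hm : 1 ≤ m) (P : MvPolynomial (Fin m) ℝ) :
    Integrable fun x : Evec m => eval (fun i => x i) P * Real.exp (-‖x‖ ^ 2) := by
  have hcont : ∀ Q : MvPolynomial (Fin m) ℝ, AEStronglyMeasurable
      (fun x : Evec m => eval (fun i => x i) Q * Real.exp (-‖x‖ ^ 2)) := fun Q =>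
    ((continuous_eval_evec Q).mul (by fun_prop)).aestronglyMeasurable
  induction P using MvPolynomial.induction_on' with
  | add p q hp hq => simp only [map_add, add_mul]; exact hp.add hq
  | monomial e a =>
    refine ((integrable_norm_pow_mul_gauss hm e.degree).const_mul |a|).mono' (hcont _)
      (ae_of_all _ fun x => ?_)
    rw [norm_mul, Real.norm_eq_abs, Real.norm_eq_abs, Real.abs_exp, ← mul_assoc]
    gcongr
    rw [eval_monomial, abs_mul]
    gcongr
    rw [Finsupp.prod, Finset.abs_prod, Finsupp.degree_apply, ← Finset.prod_pow_eq_pow_sum]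
    refine Finset.prod_le_prod (fun _ _ => abs_nonneg _) fun i _ => ?_
    rw [abs_pow]
    gcongr
    exact PiLp.norm_apply_le x i

lemma integral_X_mul_gauss (hm : 1 ≤ m) (P : MvPolynomial (Fin m) ℝ) (a : Fin m) :
    2 * ∫ x : Evec m, eval (fun i => x i) (X a * P) * Real.exp (-‖x‖ ^ 2) =
      ∫ x : Evec m, eval (fun i => x i) (pderiv a P) * Real.exp (-‖x‖ ^ 2) := by
  have hg : ∀ x : Evec m, HasFDerivAt (fun x : Evec m => Real.exp (-‖x‖ ^ 2))
      (-(Real.exp (-‖x‖ ^ 2) • (2 : ℕ) • (innerSL ℝ x : Evec m →L[ℝ] ℝ))) x := fun x => by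
    have := (hasStrictFDerivAt_norm_sq x).hasFDerivAt.neg.exp
    simpa using this
  have hga : ∀ x : Evec m, fderiv ℝ (fun x : Evec m => Real.exp (-‖x‖ ^ 2)) x
      (EuclideanSpace.single a 1) = -2 * (x a * Real.exp (-‖x‖ ^ 2)) := fun x => by
    rw [(hg x).fderiv]
    simp [EuclideanSpace.inner_single_right]
    ring
  have hPa : ∀ x : Evec m, fderiv ℝ (fun x : Evec m => eval (fun i => x i) P) x
      (EuclideanSpace.single a 1) = eval (fun i => x i) (pderiv a P) := fun x =>
    congrFun (pdv_eval a P) x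
  have hfun : (fun x : Evec m => eval (fun i => x i) P *
      fderiv ℝ (fun x : Evec m => Real.exp (-‖x‖ ^ 2)) x (EuclideanSpace.single a 1)) =
      fun x => -2 * (eval (fun i => x i) (X a * P) * Real.exp (-‖x‖ ^ 2)) := by
    ext x
    rw [hga, map_mul, eval_X]
    ring
  have h := integral_mul_fderiv_eq_neg_fderiv_mul_of_integrable
    (μ := (volume : Measure (Evec m)))
    (f := fun x : Evec m => eval (fun i => x i) P)
    (g := fun x : Evec m => Real.exp (-‖x‖ ^ 2)) (v := EuclideanSpace.single a 1)
    (by simp only [hPa]; exact integrable_eval_mul_gauss hm _)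
    (by rw [hfun]; exact (integrable_eval_mul_gauss hm _).const_mul _)
    (integrable_eval_mul_gauss hm _)
    (fun x _ => (hasFDerivAt_eval P x).differentiableAt)
    (fun x _ => (hg x).differentiableAt)
  rw [hfun] at h
  simp only [hPa] at h
  rw [integral_const_mul] at h
  linarith

lemma eval_smul_of_isHomogeneous {P : MvPolynomial (Fin m) ℝ} {n : ℕ} (hP : P.IsHomogeneous n)
    (r : ℝ) (x : Evec m) : eval (fun i => (r • x) i) P = r ^ n * eval (fun i => x i) P := by
  simp only [eval_eq, PiLp.smul_apply, smul_eq_mul, mul_pow, Finset.prod_mul_distrib,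
    Finset.mul_sum, Finset.prod_pow_eq_pow_sum]
  refine Finset.sum_congr rfl fun e he => ?_
  have := hP.degree_eq_sum_deg_support he
  rw [← this]
  ring

/-- Integration of a polynomial over the unit sphere. -/
def sphereIntegral (m : ℕ) : MvPolynomial (Fin m) ℝ →ₗ[ℝ] ℝ where
  toFun P := ∫ x : Evec m, eval (fun i => x i) P ∂(sphereM m)
  map_add' P Q := by
    simp only [map_add]
    exact integral_add (integrable_sphereM (continuous_eval_evec P))
      (integrable_sphereM (continuous_eval_evec Q))
  map_smul' c P := by simp [smul_eval, integral_const_mul]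

lemma sphereIntegral_X_mul (hm : 1 ≤ m) {P : MvPolynomial (Fin m) ℝ} {n : ℕ}
    (hP : P.IsHomogeneous (n + 1)) (a : Fin m) :
    ((m : ℝ) + n) * sphereIntegral m (X a * P) = sphereIntegral m (pderiv a P) := by
  have h := integral_X_mul_gauss hm P a
  have hX : (X a * P).IsHomogeneous (n + 2) := by
    convert (isHomogeneous_X ℝ a).mul hP using 1
    ring
  have hD : (pderiv a P).IsHomogeneous n := hP.pderiv
  rw [integral_homogeneous_mul_gauss hm fun r x _ => eval_smul_of_isHomogeneous hX r x,
    integral_homogeneous_mul_gauss hm fun r x _ => eval_smul_of_isHomogeneous hD r x,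
    ← add_assoc] at h
  have h2 := gaussMoment_add_two (m - 1 + n)
  have h3 : (((m - 1 + n : ℕ) : ℝ) + 1) = m + n := by
    rw [← Nat.cast_add_one, ← Nat.cast_add]; congr 1; omega
  rw [h3] at h2
  refine mul_right_cancel₀ (gaussMoment_pos (m - 1 + n)).ne' ?_
  change 2 * (sphereIntegral m (X a * P) * _) = sphereIntegral m (pderiv a P) * _ at h
  rw [← h]
  linear_combination -(sphereIntegral m (X a * P)) * h2

/-- The pairing of a harmonic homogeneous polynomial with a power of a linear form over the
sphere is evaluation at the vector representing the linear form, up to a constant. -/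
lemma sphereIntegral_linear_pow_mul (hm : 1 ≤ m) (v : Evec m) (j : ℕ) :
    ∀ P : MvPolynomial (Fin m) ℝ, P.IsHomogeneous j → polyLaplacian P = 0 →
    (∏ i ∈ Finset.range j, ((m : ℝ) + 2 * i)) *
      sphereIntegral m ((∑ i, C (v i) * X i) ^ j * P) =
      j.factorial * omegaS m * eval (fun i => v i) P := by
  induction j with
  | zero =>
    intro P hP _
    rw [(totalDegree_eq_zero_iff_eq_C (p := P)).1 (Nat.le_zero.1 hP.totalDegree_le)]
    simp [sphereIntegral, omegaS, Measure.real]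
  | succ j ih =>
    intro P hP hL
    set ℓ : MvPolynomial (Fin m) ℝ := ∑ i, C (v i) * X i with hℓ
    have hℓh : ℓ.IsHomogeneous 1 :=
      IsHomogeneous.sum _ _ _ fun i _ => isHomogeneous_C_mul_X _ _
    have hℓd : ∀ a, pderiv a ℓ = C (v a) := fun a => by
      simp [hℓ, pderiv_X, Pi.single_apply]
    set Q : MvPolynomial (Fin m) ℝ := ∑ a, C (v a) * pderiv a P with hQ
    have hQh : Q.IsHomogeneous j :=
      IsHomogeneous.sum _ _ _ fun a _ => (hP.pderiv (i := a)).C_mul _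
    have hQL : polyLaplacian Q = 0 := by
      have hlin : polyLaplacian Q = ∑ a, C (v a) * polyLaplacian (pderiv a P) := by
        simp only [hQ, polyLaplacian, map_sum, pderiv_C_mul, Finset.mul_sum]
        exact Finset.sum_comm
      rw [hlin]
      exact Finset.sum_eq_zero fun a _ => by rw [polyLaplacian_pderiv hL a, mul_zero]
    have hE := hP.sum_X_mul_pderiv
    have hQv : eval (fun i => v i) Q = (j + 1) * eval (fun i => v i) P := by
      have := congrArg (eval fun i => v i) hE
      simpa [hQ] using this
    have hrec : ((m : ℝ) + 2 * j) * sphereIntegral m (ℓ ^ (j + 1) * P) =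
        sphereIntegral m (ℓ ^ j * Q) := by
      have h1 : ∀ a, ((m : ℝ) + 2 * j) * sphereIntegral m (X a * (ℓ ^ (j + 1) * pderiv a P)) =
          sphereIntegral m (pderiv a (ℓ ^ (j + 1) * pderiv a P)) := fun a => by
        have hh : (ℓ ^ (j + 1) * pderiv a P).IsHomogeneous (2 * j + 1) := by
          convert (hℓh.pow (j + 1)).mul (hP.pderiv (i := a)) using 1
          simp; ring
        simpa using sphereIntegral_X_mul hm hh a
      have h2 : ∑ a, X a * (ℓ ^ (j + 1) * pderiv a P) = ((j + 1 : ℕ) : ℝ) • (ℓ ^ (j + 1) * P) := by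
        rw [← mul_smul_comm, Nat.cast_smul_eq_nsmul, ← hE, Finset.mul_sum]
        exact Finset.sum_congr rfl fun a _ => by ring
      have h3 : ∑ a, pderiv a (ℓ ^ (j + 1) * pderiv a P) =
          ((j + 1 : ℕ) : ℝ) • (ℓ ^ j * Q) := by
        have : ∑ a, pderiv a (ℓ ^ (j + 1) * pderiv a P) =
            ((j + 1 : ℕ) : ℝ) • (ℓ ^ j * Q) + ℓ ^ (j + 1) * polyLaplacian P := by
          rw [Nat.cast_smul_eq_nsmul, polyLaplacian, hQ, Finset.mul_sum, Finset.mul_sum,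
            Finset.smul_sum, ← Finset.sum_add_distrib]
          refine Finset.sum_congr rfl fun a _ => ?_
          rw [pderiv_mul, pderiv_pow, hℓd]
          simp only [nsmul_eq_mul, Nat.add_sub_cancel]
          ring
        rw [this, hL, mul_zero, add_zero]
      have h4 := Finset.sum_congr (rfl : (Finset.univ : Finset (Fin m)) = Finset.univ)
        fun a _ => h1 a
      rw [← Finset.mul_sum, ← map_sum, ← map_sum, h2, h3, map_smul, map_smul] at h4
      have h5 : ((j + 1 : ℕ) : ℝ) ≠ 0 := by positivity
      refine mul_left_cancel₀ h5 ?_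
      simp only [smul_eq_mul] at h4
      linear_combination h4
    rw [Finset.prod_range_succ, mul_assoc, hrec, ih Q hQh hQL, hQv, Nat.factorial_succ]
    push_cast
    ring

end PolynomialIntegrals

lemma reflv_eq_reflection {m : ℕ} (a u : Evec m) :
    reflv a u = (Submodule.span ℝ {a})ᗮ.reflection u := by
  rw [Submodule.reflection_orthogonal_apply, Submodule.reflection_singleton_apply, reflv]
  simp only [RCLike.ofReal_real_eq_id, id_eq, neg_sub]
  rw [← Nat.cast_smul_eq_nsmul ℝ, smul_smul]
  congr 2
  push_cast
  ring

lemma norm_reflv {m : ℕ} (a u : Evec m) : ‖reflv a u‖ = ‖u‖ := by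
  rw [reflv_eq_reflection, LinearIsometryEquiv.norm_map]

lemma reflv_smul_left {m : ℕ} {r : ℝ} (hr : r ≠ 0) (a u : Evec m) :
    reflv (r • a) u = reflv a u := by
  rcases eq_or_ne a 0 with rfl | ha
  · simp
  have : ‖a‖ ≠ 0 := norm_ne_zero_iff.2 ha
  simp only [reflv, smul_smul, norm_smul, real_inner_smul_left, Real.norm_eq_abs, mul_pow, sq_abs]
  congr 2
  field_simp

/-- The alternating sum `₂F₁(-k, 1; μ/2; 1)` in closed form. -/
lemma sum_descFactorial_div_prod (k : ℕ) : ∀ μ : ℝ, 2 < μ →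
    ∑ j ∈ Finset.range (k + 1), (-2 : ℝ) ^ j * k.descFactorial j /
      ∏ i ∈ Finset.range j, (μ + 2 * i) = (μ - 2) / (μ + 2 * k - 2) := by
  induction k with
  | zero =>
    intro μ hμ
    have : μ - 2 ≠ 0 := by linarith
    simp [this]
  | succ k ih =>
    intro μ hμ
    rw [Finset.sum_range_succ']
    have h : ∀ j, (-2 : ℝ) ^ (j + 1) * (k + 1).descFactorial (j + 1) /
        ∏ i ∈ Finset.range (j + 1), (μ + 2 * i) = (-2 * (k + 1) / μ) *
          ((-2 : ℝ) ^ j * k.descFactorial j / ∏ i ∈ Finset.range j, ((μ + 2) + 2 * i)) := by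
      intro j
      rw [Finset.prod_range_succ', Nat.succ_descFactorial_succ]
      have hp : ∏ i ∈ Finset.range j, (μ + 2 * ((i + 1 : ℕ) : ℝ)) =
          ∏ i ∈ Finset.range j, ((μ + 2) + 2 * (i : ℝ)) :=
        Finset.prod_congr rfl fun i _ => by push_cast; ring
      rw [hp, div_mul_div_comm]
      push_cast
      congr 1 <;> ring
    simp only [h]
    rw [← Finset.mul_sum, ih (μ + 2) (by linarith)]
    have hk : (0 : ℝ) ≤ k := k.cast_nonneg
    have h1 : μ ≠ 0 := by linarith
    have h2 : μ + 2 + 2 * k - 2 ≠ 0 := by linarith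
    have h3 : μ + 2 * ((k : ℝ) + 1) - 2 ≠ 0 := by linarith
    simp only [pow_zero, Nat.descFactorial_zero, Finset.range_zero, Finset.prod_empty]
    push_cast
    field_simp
    ring

section ReflectionAverage

open MvPolynomial

lemma eval_translate {m : ℕ} (P : MvPolynomial (Fin m) ℝ) (x v : Evec m) :
    eval (fun i => x i) (aeval (fun i => X i + C (v i)) P : MvPolynomial (Fin m) ℝ) =
      eval (fun i => (x + v) i) P := by
  induction P using MvPolynomial.induction_on with
  | C a => simp
  | add p q hp hq => simp only [map_add, hp, hq]
  | mul_X p j hp => simp only [map_mul, hp, aeval_X, map_add, eval_X, eval_C, PiLp.add_apply]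

/-- Averaging a solid harmonic over all reflections of a point multiplies it by a constant. -/
lemma integral_reflv {m k : ℕ} (hm : 3 ≤ m) {p : Evec m → ℝ} (hp : IsHk m k p) (v : Evec m) :
    ∫ u, p (reflv u v) ∂(sphereM m) = ((m : ℝ) - 2) / (m + 2 * k - 2) * omegaS m * p v := by
  obtain ⟨⟨P, hP⟩, hhom, hlap⟩ := hp
  obtain rfl : p = fun x => eval (fun i => x i) P := funext hP
  have hPL : polyLaplacian P = 0 := polyLaplacian_eq_zero hlap
  set Q : MvPolynomial (Fin m) ℝ := aeval (fun i => X i + C (v i)) P with hQ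
  have hQL : polyLaplacian Q = 0 := polyLaplacian_translate hPL v
  have hQe : ∀ x : Evec m, eval (fun i => x i) Q = eval (fun i => (x + v) i) P := fun x =>
    eval_translate P x v
  set N := max Q.totalDegree k + 1 with hN
  have hsum : Q = ∑ j ∈ Finset.range N, homogeneousComponent j Q := by
    conv_lhs => rw [← sum_homogeneousComponent Q]
    refine Finset.sum_subset (Finset.range_mono (by omega)) fun j _ hj => ?_
    exact homogeneousComponent_eq_zero _ _ (by simpa using hj)
  have hexp : ∀ (s : ℝ) (x : Evec m), eval (fun i => (s • x + v) i) P =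
      ∑ j ∈ Finset.range N, s ^ j * eval (fun i => x i) (homogeneousComponent j Q) := by
    intro s x
    rw [← hQe, hsum, map_sum]
    refine Finset.sum_congr rfl fun j _ => ?_
    rw [← hsum]
    exact eval_smul_of_isHomogeneous (homogeneousComponent_isHomogeneous j Q) s x
  have hcoef : ∀ j ∈ Finset.range N, eval (fun i => v i) (homogeneousComponent j Q) =
      k.choose j * eval (fun i => v i) P := by
    intro j hj
    have hpoly : ∑ j ∈ Finset.range N,
        Polynomial.C (eval (fun i => v i) (homogeneousComponent j Q)) * Polynomial.X ^ j =
        Polynomial.C (eval (fun i => v i) P) * (1 + Polynomial.X) ^ k := by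
      refine Polynomial.funext fun s => ?_
      have h1 := hexp s v
      have h2 := hhom (1 + s) v
      rw [add_smul, one_smul, add_comm v] at h2
      beta_reduce at h2
      rw [h2] at h1
      simp only [Polynomial.eval_finsetSum, Polynomial.eval_mul, Polynomial.eval_C,
        Polynomial.eval_pow, Polynomial.eval_X, Polynomial.eval_add, Polynomial.eval_one]
      rw [mul_comm, h1]
      exact Finset.sum_congr rfl fun j _ => mul_comm _ _
    have := congrArg (fun q => Polynomial.coeff q j) hpoly
    simp only [Polynomial.finsetSum_coeff, Polynomial.coeff_C_mul, Polynomial.coeff_X_pow,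
      Polynomial.coeff_one_add_X_pow, mul_ite, mul_one, mul_zero, Finset.sum_ite_eq, if_pos hj]
      at this
    rw [this, mul_comm]
  set ℓ : MvPolynomial (Fin m) ℝ := ∑ i, C (v i) * X i with hℓ
  have hint : ∫ u : Evec m, eval (fun i => (reflv u v) i) P ∂(sphereM m) =
      sphereIntegral m (∑ j ∈ Finset.range N, (-2 : ℝ) ^ j • (ℓ ^ j * homogeneousComponent j Q)) := by
    refine integral_congr_ae ?_
    filter_upwards [ae_sphereM m] with u hu
    have hr : reflv u v = (-2 * ⟪u, v⟫) • u + v := by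
      rw [reflv, hu]
      simp [sub_eq_add_neg, add_comm]
    rw [hr, hexp, map_sum]
    refine Finset.sum_congr rfl fun j _ => ?_
    have hl : eval (fun i => u i) ℓ = ⟪u, v⟫ := by
      simp [hℓ, PiLp.inner_apply]
    rw [smul_eval, map_mul, map_pow, hl, mul_pow]
    ring
  rw [hint, map_sum]
  have hterm : ∀ j ∈ Finset.range N,
      sphereIntegral m ((-2 : ℝ) ^ j • (ℓ ^ j * homogeneousComponent j Q)) =
      ((-2 : ℝ) ^ j * k.descFactorial j / ∏ i ∈ Finset.range j, ((m : ℝ) + 2 * i)) *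
        (omegaS m * eval (fun i => v i) P) := by
    intro j hj
    have h := sphereIntegral_linear_pow_mul (by omega) v j _
      (homogeneousComponent_isHomogeneous j Q) (polyLaplacian_homogeneousComponent hQL j)
    rw [hcoef j hj] at h
    have hpos : (0 : ℝ) < ∏ i ∈ Finset.range j, ((m : ℝ) + 2 * i) :=
      Finset.prod_pos fun i _ => by positivity
    rw [map_smul, smul_eq_mul, Nat.descFactorial_eq_factorial_mul_choose]
    push_cast
    field_simp
    rw [← hℓ] at h
    linear_combination h
  rw [Finset.sum_congr rfl hterm, ← Finset.sum_mul, mul_assoc]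
  congr 1
  rw [← sum_descFactorial_div_prod k m (by exact_mod_cast hm)]
  refine (Finset.sum_subset (Finset.range_mono (by omega)) fun j _ hj => ?_).symm
  rw [Nat.descFactorial_eq_zero_iff_lt.2 (by simpa using hj)]
  simp

end ReflectionAverage

section HalfSpace

variable {d : ℕ}

lemma upP_sub (x y : Evec d) (s t : ℝ) : upP d x s - upP d y t = upP d (x - y) (s - t) := by
  ext i
  refine Fin.lastCases ?_ (fun j => ?_) i <;> simp [upP]

lemma upP_smul (r : ℝ) (x : Evec d) (s : ℝ) : upP d (r • x) (r * s) = r • upP d x s := by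
  ext i
  refine Fin.lastCases ?_ (fun j => ?_) i <;> simp [upP]

lemma norm_sq_upP (x : Evec d) (s : ℝ) : ‖upP d x s‖ ^ 2 = ‖x‖ ^ 2 + s ^ 2 := by
  simp [EuclideanSpace.norm_sq_eq, Fin.sum_univ_castSucc, upP]

lemma continuous_upP : Continuous fun z : Evec d × ℝ => upP d z.1 z.2 := by
  unfold upP
  refine (EuclideanSpace.equiv (Fin (d + 1)) ℝ).symm.continuous.comp (continuous_pi fun i => ?_)
  refine Fin.lastCases ?_ (fun j => ?_) i
  · simpa using continuous_snd
  · simp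
    fun_prop

/-- `(x', y) ↦ (x', y)` as a measurable equivalence `ℝ^d × ℝ ≃ ℝ^{d+1}`. -/
def upPMeasurableEquiv (d : ℕ) : Evec d × ℝ ≃ᵐ Evec (d + 1) :=
  (((MeasurableEquiv.toLp 2 (Fin d → ℝ)).symm.prodCongr (MeasurableEquiv.refl ℝ)).trans
    MeasurableEquiv.prodComm).trans
    ((MeasurableEquiv.piFinSuccAbove (fun _ : Fin (d + 1) => ℝ) (Fin.last d)).symm.trans
      (MeasurableEquiv.toLp 2 (Fin (d + 1) → ℝ)))

lemma upPMeasurableEquiv_apply (z : Evec d × ℝ) :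
    upPMeasurableEquiv d z = upP d z.1 z.2 := by
  ext i
  refine Fin.lastCases ?_ (fun j => ?_) i <;>
    simp [upP, upPMeasurableEquiv, MeasurableEquiv.piFinSuccAbove] <;> rfl

lemma measurePreserving_upPMeasurableEquiv :
    MeasurePreserving (upPMeasurableEquiv d) (volume.prod volume) volume := by
  have h1 : MeasurePreserving (fun z : Evec d × ℝ => (WithLp.ofLp z.1, z.2))
      (volume.prod volume) (volume.prod volume) :=
    (PiLp.volume_preserving_ofLp (Fin d)).prod (MeasurePreserving.id _)
  have h2 := (Measure.measurePreserving_swap (μ := (volume : Measure (Fin d → ℝ)))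
    (ν := (volume : Measure ℝ))).comp h1
  have h3 := (volume_preserving_piFinSuccAbove (fun _ : Fin (d + 1) => ℝ) (Fin.last d)).symm
  exact ((PiLp.volume_preserving_toLp (Fin (d + 1))).comp h3).comp h2

lemma integral_abs_pow_mul_gauss (d : ℕ) {b : ℝ} (hb : 0 < b) :
    ∫ y : ℝ, |y| ^ d * Real.exp (-(y ^ 2 * b)) =
      2 * (b ^ (-((d : ℝ) + 1) / 2) * gaussMoment d) := by
  rw [← gaussMoment_scale d hb, ← integral_comp_abs
    (f := fun y : ℝ => y ^ d * Real.exp (-(y ^ 2 * b)))]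
  simp

lemma integrable_abs_pow_mul_gauss (d : ℕ) {b : ℝ} (hb : 0 < b) :
    Integrable fun y : ℝ => |y| ^ d * Real.exp (-(y ^ 2 * b)) := by
  have h := integrable_rpow_mul_exp_neg_mul_sq hb (s := d)
    (by have : (0 : ℝ) ≤ d := d.cast_nonneg
        linarith)
  refine h.norm.congr (ae_of_all _ fun y => ?_)
  simp [Real.rpow_natCast, mul_comm]

lemma integrable_halfSpace_weight (d : ℕ) :
    Integrable fun s : Evec d => (1 + ‖s‖ ^ 2) ^ (-((d : ℝ) + 1) / 2) :=
  integrable_rpow_neg_one_add_norm_sq (by simp)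

/-- Central projection of the boundary hyperplane onto the sphere. -/
lemma integral_upP_one {H : Evec (d + 1) → ℝ} (hmeas : Measurable H) {M : ℝ}
    (hM : ∀ x, |H x| ≤ M) (hH : ∀ (r : ℝ) (x : Evec (d + 1)), r ≠ 0 → H (r • x) = H x) :
    2 * ∫ s : Evec d, (1 + ‖s‖ ^ 2) ^ (-((d : ℝ) + 1) / 2) * H (upP d s 1) =
      ∫ u, H u ∂(sphereM (d + 1)) := by
  have hM0 : 0 ≤ M := (abs_nonneg _).trans (hM 0)
  have hpolar := integral_homogeneous_mul_gauss (n := 0) (Nat.le_add_left 1 d)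
    (fun r x hr => (hH r x hr.ne').trans (by simp) : ∀ (r : ℝ) (x : Evec (d + 1)), 0 < r →
      H (r • x) = r ^ 0 * H x)
  have hH1 : Measurable fun s : Evec d => H (upP d s 1) :=
    hmeas.comp (continuous_upP.measurable.comp
      (by fun_prop : Measurable fun s : Evec d => (s, (1 : ℝ))))
  have hint : Integrable fun x : Evec (d + 1) => H x * Real.exp (-‖x‖ ^ 2) := by
    have h0 := (integrable_norm_pow_mul_gauss (m := d + 1) (by omega) 0).const_mul M
    refine h0.mono' (by fun_prop) (ae_of_all _ fun x => ?_)
    rw [norm_mul, Real.norm_eq_abs, Real.norm_eq_abs, Real.abs_exp]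
    simpa using mul_le_mul_of_nonneg_right (hM x) (Real.exp_pos _).le
  have hmp := measurePreserving_upPMeasurableEquiv (d := d)
  have hint' := (hmp.integrable_comp_emb (upPMeasurableEquiv d).measurableEmbedding).2 hint
  have hfub : ∫ x : Evec (d + 1), H x * Real.exp (-‖x‖ ^ 2) =
      ∫ y : ℝ, ∫ x : Evec d, H (upP d x y) * Real.exp (-(‖x‖ ^ 2 + y ^ 2)) := by
    rw [← hmp.integral_comp (upPMeasurableEquiv d).measurableEmbedding]
    refine (integral_prod_symm _ hint').trans ?_
    refine integral_congr_ae (ae_of_all _ fun y => integral_congr_ae (ae_of_all _ fun x => ?_))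
    simp [upPMeasurableEquiv_apply, norm_sq_upP]
  have hscale : ∀ y : ℝ, y ≠ 0 →
      ∫ x : Evec d, H (upP d x y) * Real.exp (-(‖x‖ ^ 2 + y ^ 2)) =
      ∫ s : Evec d, H (upP d s 1) * (|y| ^ d * Real.exp (-(y ^ 2 * (1 + ‖s‖ ^ 2)))) := by
    intro y hy
    have h := Measure.integral_comp_smul (volume : Measure (Evec d))
      (fun x => H (upP d x y) * Real.exp (-(‖x‖ ^ 2 + y ^ 2))) y
    have h1 : ∀ s : Evec d, H (upP d (y • s) y) = H (upP d s 1) := fun s => by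
      have := upP_smul y s 1
      rw [mul_one] at this
      rw [this, hH y _ hy]
    have hyd : |y| ^ d ≠ 0 := pow_ne_zero _ (abs_ne_zero.2 hy)
    simp only [h1, norm_smul, mul_pow, Real.norm_eq_abs, sq_abs, finrank_euclideanSpace_fin,
      smul_eq_mul, abs_inv, abs_pow] at h
    rw [eq_comm, inv_mul_eq_iff_eq_mul₀ hyd] at h
    rw [h, ← integral_const_mul]
    congr 1 with s
    rw [show y ^ 2 * (1 + ‖s‖ ^ 2) = y ^ 2 * ‖s‖ ^ 2 + y ^ 2 by ring]
    ring
  have hprod : Integrable (Function.uncurry fun (s : Evec d) (y : ℝ) =>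
      H (upP d s 1) * (|y| ^ d * Real.exp (-(y ^ 2 * (1 + ‖s‖ ^ 2)))))
      (volume.prod volume) := by
    have hb : ∀ s : Evec d, 0 < 1 + ‖s‖ ^ 2 := fun s => by positivity
    have hms : Measurable (Function.uncurry fun (s : Evec d) (y : ℝ) =>
        H (upP d s 1) * (|y| ^ d * Real.exp (-(y ^ 2 * (1 + ‖s‖ ^ 2))))) :=
      (hH1.comp measurable_fst).mul (by fun_prop)
    rw [integrable_prod_iff hms.aestronglyMeasurable]
    refine ⟨ae_of_all _ fun s => (integrable_abs_pow_mul_gauss d (hb s)).const_mul (H (upP d s 1)), ?_⟩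
    have hn : ∀ s : Evec d, ∫ y : ℝ, ‖Function.uncurry (fun (s : Evec d) (y : ℝ) =>
        H (upP d s 1) * (|y| ^ d * Real.exp (-(y ^ 2 * (1 + ‖s‖ ^ 2))))) (s, y)‖ =
        |H (upP d s 1)| *
          (2 * ((1 + ‖s‖ ^ 2) ^ (-((d : ℝ) + 1) / 2) * gaussMoment d)) := fun s => by
      rw [← integral_abs_pow_mul_gauss d (hb s), ← integral_const_mul]
      simp
    simp only [hn]
    refine (((integrable_halfSpace_weight d).mul_const (gaussMoment d)).const_mul 2).bdd_mul
      (c := M) hH1.abs.aestronglyMeasurable (ae_of_all _ fun s => ?_)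
    simpa using hM _
  have hswap : ∫ y : ℝ, ∫ x : Evec d, H (upP d x y) * Real.exp (-(‖x‖ ^ 2 + y ^ 2)) =
      ∫ s : Evec d, ∫ y : ℝ, H (upP d s 1) *
        (|y| ^ d * Real.exp (-(y ^ 2 * (1 + ‖s‖ ^ 2)))) := by
    rw [integral_integral_swap hprod]
    refine integral_congr_ae ?_
    filter_upwards [Measure.ae_ne volume (0 : ℝ)] with y hy using hscale y hy
  refine mul_right_cancel₀ (gaussMoment_pos d).ne' ?_
  rw [hfub, hswap] at hpolar
  simp only [Nat.add_sub_cancel, add_zero] at hpolar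
  rw [← hpolar, mul_assoc, ← integral_mul_const, ← integral_const_mul]
  refine integral_congr_ae (ae_of_all _ fun s => ?_)
  simp only
  rw [integral_const_mul, integral_abs_pow_mul_gauss d (by positivity)]
  ring

end HalfSpace

section PoissonIntegral

variable {d k : ℕ}

lemma upP_one_ne_zero (s : Evec d) : upP d s 1 ≠ 0 := by
  intro h
  have := norm_sq_upP s 1
  rw [h] at this
  simp at this
  nlinarith [sq_nonneg ‖s‖]

lemma norm_upP_one_pow (s : Evec d) :
    (‖upP d s 1‖ ^ (d + 1))⁻¹ = (1 + ‖s‖ ^ 2) ^ (-((d : ℝ) + 1) / 2) := by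
  have h : ‖upP d s 1‖ = (1 + ‖s‖ ^ 2) ^ (1 / 2 : ℝ) := by
    rw [← Real.sqrt_eq_rpow, ← Real.sqrt_sq (norm_nonneg (upP d s 1)), norm_sq_upP]
    congr 1
    ring
  rw [h, ← Real.rpow_natCast, ← Real.rpow_mul (by positivity), ← Real.rpow_neg (by positivity)]
  congr 1
  push_cast
  ring

lemma continuous_reflv_upP_one (v : Evec (d + 1)) :
    Continuous fun s : Evec d => reflv (upP d s 1) v := by
  have hc : Continuous fun s : Evec d => upP d s 1 :=
    continuous_upP.comp (by fun_prop : Continuous fun s : Evec d => (s, (1 : ℝ)))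
  have hne : ∀ s : Evec d, ‖upP d s 1‖ ^ 2 ≠ 0 := fun s =>
    pow_ne_zero _ (norm_ne_zero_iff.2 (upP_one_ne_zero s))
  unfold reflv
  exact continuous_const.sub
    (((continuous_const.mul (hc.inner continuous_const)).div (hc.norm.pow 2) hne).smul hc)

lemma IsHk.continuous {m : ℕ} {p : Evec m → ℝ} (hp : IsHk m k p) : Continuous p := by
  obtain ⟨⟨P, hP⟩, -⟩ := hp
  rw [funext hP]
  exact continuous_eval_evec P

/-- The Poisson integral in scaled coordinates `t' = x' - y s`, with the spherical integration
carried out; it makes sense up to the boundary `y = 0`. -/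
def scaledPoisson (d k : ℕ) (f : Evec d → Evec (d + 1) → ℝ) (v : Evec (d + 1))
    (x : Evec d × ℝ) : ℝ :=
  cmk (d + 1) k * ∫ s : Evec d, (1 + ‖s‖ ^ 2) ^ (-((d : ℝ) + 1) / 2) *
    f (x.1 - x.2 • s) (reflv (upP d s 1) v)

lemma integral_Zk_reflv {m : ℕ} {Z : Evec m → Evec m → ℝ} (hZ : IsZk m k Z) {g : Evec m → ℝ}
    (hg : ∃ q, IsHk m k q ∧ ∀ u ∈ closedBall (0 : Evec m) 1, g u = q u)
    (a : Evec m) {v : Evec m} (hv : ‖v‖ ≤ 1) :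
    ∫ u, Z (reflv a u) v * g u ∂(sphereM m) = g (reflv a v) := by
  obtain ⟨q, hq, hgq⟩ := hg
  rw [hgq _ (by simpa [norm_reflv] using hv), ← hZ.2.1 q hq]
  refine integral_congr_ae ?_
  filter_upwards [ae_sphereM m] with u hu
  rw [hgq u (by simp [hu])]
  congr 1
  have h := hZ.2.2.2.2 ((Submodule.span ℝ {a})ᗮ.reflection) (reflv a u) v
  rw [reflv_eq_reflection a u, Submodule.reflection_reflection] at h
  rw [reflv_eq_reflection, reflv_eq_reflection, h]

lemma PHint_eq_scaledPoisson {Z : Evec (d + 1) → Evec (d + 1) → ℝ} (hZ : IsZk (d + 1) k Z)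
    {f : Evec d → Evec (d + 1) → ℝ}
    (hfH : ∀ x' : Evec d, ∃ q, IsHk (d + 1) k q ∧
      ∀ u ∈ closedBall (0 : Evec (d + 1)) 1, f x' u = q u)
    {v : Evec (d + 1)} (hv : ‖v‖ ≤ 1) (x' : Evec d) {y : ℝ} (hy : 0 < y) :
    PHint d k Z f x' y v = scaledPoisson d k f v (x', y) := by
  set F : Evec d → ℝ := fun t => y / ‖upP d t y‖ ^ (d + 1) *
    f (x' - t) (reflv (upP d t y) v) with hF
  have h1 : PHint d k Z f x' y v = cmk (d + 1) k * ∫ t, F (x' - t) := by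
    rw [PHint, ← integral_const_mul]
    refine integral_congr_ae (ae_of_all _ fun t => ?_)
    simp only [hF, PH, upP_sub, sub_zero, sub_sub_cancel, mul_assoc]
    rw [integral_const_mul, integral_const_mul, integral_Zk_reflv hZ (hfH t) _ hv]
  have h2 := Measure.integral_comp_smul (volume : Measure (Evec d)) F y
  have hyd : (0 : ℝ) < y ^ d := by positivity
  rw [finrank_euclideanSpace_fin, abs_of_pos (inv_pos.2 hyd), smul_eq_mul, eq_comm,
    inv_mul_eq_iff_eq_mul₀ hyd.ne', ← integral_const_mul] at h2
  rw [h1, integral_sub_left_eq_self, h2, scaledPoisson]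
  congr 2 with s
  have h3 : upP d (y • s) y = y • upP d s 1 := by
    rw [← upP_smul, mul_one]
  rw [hF]
  simp only [h3, reflv_smul_left hy.ne', norm_smul, Real.norm_eq_abs, abs_of_pos hy]
  rw [← norm_upP_one_pow, ← mul_assoc]
  congr 1
  have := norm_ne_zero_iff.2 (upP_one_ne_zero s)
  field_simp
  ring

lemma continuous_scaledPoisson {f : Evec d → Evec (d + 1) → ℝ}
    (hfc : ContinuousOn (fun q : Evec d × Evec (d + 1) => f q.1 q.2)
      (Set.univ ×ˢ closedBall (0 : Evec (d + 1)) 1))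
    {M : ℝ} (hM : ∀ (x' : Evec d) (u : Evec (d + 1)), ‖u‖ ≤ 1 → |f x' u| ≤ M)
    {v : Evec (d + 1)} (hv : ‖v‖ ≤ 1) : Continuous (scaledPoisson d k f v) := by
  have hw : Continuous fun s : Evec d => (1 + ‖s‖ ^ 2) ^ (-((d : ℝ) + 1) / 2) :=
    Continuous.rpow_const (by fun_prop) fun s => Or.inl (by positivity)
  have hball : ∀ s : Evec d, ‖reflv (upP d s 1) v‖ ≤ 1 := fun s => by rwa [norm_reflv]
  refine continuous_const.mul (continuous_of_dominated (bound := fun s : Evec d =>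
    (1 + ‖s‖ ^ 2) ^ (-((d : ℝ) + 1) / 2) * M) (fun x => ?_) (fun x => ae_of_all _ fun s => ?_)
    ((integrable_halfSpace_weight d).mul_const M) (ae_of_all _ fun s => ?_))
  · refine (hw.mul (hfc.comp_continuous (f := fun s : Evec d =>
      (x.1 - x.2 • s, reflv (upP d s 1) v)) ?_ fun s => ?_)).aestronglyMeasurable
    · exact (by fun_prop : Continuous fun s : Evec d => x.1 - x.2 • s).prodMk
        (continuous_reflv_upP_one v)
    · simpa using hball s
  · rw [norm_mul, Real.norm_eq_abs, abs_of_nonneg (by positivity)]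
    exact mul_le_mul_of_nonneg_left (hM _ _ (hball s)) (by positivity)
  · refine continuous_const.mul (hfc.comp_continuous (f := fun x : Evec d × ℝ =>
      (x.1 - x.2 • s, reflv (upP d s 1) v)) (by fun_prop) fun x => ?_)
    simpa using hball s

lemma scaledPoisson_zero (hm : 3 ≤ d + 1) {f : Evec d → Evec (d + 1) → ℝ}
    {M : ℝ} (hM : ∀ (x' : Evec d) (u : Evec (d + 1)), ‖u‖ ≤ 1 → |f x' u| ≤ M) {a : Evec d}
    (hfa : ∃ q, IsHk (d + 1) k q ∧ ∀ u ∈ closedBall (0 : Evec (d + 1)) 1, f a u = q u)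
    {v : Evec (d + 1)} (hv : ‖v‖ ≤ 1) : scaledPoisson d k f v (a, 0) = f a v := by
  obtain ⟨q, hq, hfq⟩ := hfa
  have hball : ∀ x : Evec (d + 1), reflv x v ∈ closedBall (0 : Evec (d + 1)) 1 := fun x => by
    simpa [norm_reflv] using hv
  have hmeas : Measurable fun x : Evec (d + 1) => q (reflv x v) := by
    refine hq.continuous.measurable.comp ?_
    unfold reflv
    fun_prop
  have h := integral_upP_one (d := d) hmeas (M := M)
    (fun x => by rw [← hfq _ (hball x)]; exact hM _ _ (by simpa using hball x))
    (fun r x hr => by rw [reflv_smul_left hr])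
  rw [integral_reflv hm hq] at h
  have hω := omegaS_pos (m := d + 1) (by omega)
  have hd : (3 : ℝ) ≤ ((d + 1 : ℕ) : ℝ) := by exact_mod_cast hm
  have hk : (0 : ℝ) ≤ k := k.cast_nonneg
  have h1 : ((d + 1 : ℕ) : ℝ) - 2 ≠ 0 := by linarith
  have h2 : ((d + 1 : ℕ) : ℝ) + 2 * k - 2 ≠ 0 := by linarith
  rw [hfq v (by simpa using hv), scaledPoisson, cmk]
  simp only [zero_smul, sub_zero, hfq _ (hball _)]
  rw [eq_div_of_mul_eq two_ne_zero ((mul_comm _ _).trans h)]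
  field_simp

end PoissonIntegral

/-- boundary continuity of the half-space Poisson integral with
continuous bounded data. Here `m = d+1 ≥ 3`. -/
theorem stmt_3 (d k : ℕ) (hm : 3 ≤ d + 1) (hk : 1 ≤ k)
    (Z : Evec (d + 1) → Evec (d + 1) → ℝ) (hZ : IsZk (d + 1) k Z)
    (f : Evec d → Evec (d + 1) → ℝ)
    (hfc : ContinuousOn (fun q : Evec d × Evec (d + 1) => f q.1 q.2)
      (Set.univ ×ˢ closedBall (0 : Evec (d + 1)) 1))
    (hfb : ∃ M : ℝ, ∀ (x' : Evec d) (u : Evec (d + 1)), ‖u‖ ≤ 1 → |f x' u| ≤ M)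
    (hfH : ∀ x' : Evec d, ∃ q, IsHk (d + 1) k q ∧
      ∀ u ∈ closedBall (0 : Evec (d + 1)) 1, f x' u = q u) :
    (∀ (a : Evec d) (v : Evec (d + 1)), ‖v‖ < 1 →
      Tendsto (fun x : Evec d × ℝ => PHint d k Z f x.1 x.2 v)
        (𝓝[{x : Evec d × ℝ | 0 < x.2}] (a, 0)) (𝓝 (f a v))) ∧
    (∀ v : Evec (d + 1), ‖v‖ < 1 →
      ContinuousOn
        (fun x : Evec d × ℝ => if 0 < x.2 then PHint d k Z f x.1 x.2 v else f x.1 v)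
        {x : Evec d × ℝ | 0 ≤ x.2}) := by
  obtain ⟨M, hM⟩ := hfb
  have hbd : ∀ (a : Evec d) (v : Evec (d + 1)), ‖v‖ < 1 → scaledPoisson d k f v (a, 0) = f a v :=
    fun a v hv => scaledPoisson_zero hm hM (hfH a) hv.le
  refine ⟨fun a v hv => ?_, fun v hv => ?_⟩
  · rw [← hbd a v hv]
    refine ((continuous_scaledPoisson hfc hM hv.le).tendsto (a, 0)).mono_left
      nhdsWithin_le_nhds |>.congr' ?_
    filter_upwards [self_mem_nhdsWithin] with x hx
    exact (PHint_eq_scaledPoisson hZ hfH hv.le x.1 hx).symm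
  · refine (continuous_scaledPoisson (k := k) hfc hM hv.le).continuousOn.congr fun x hx => ?_
    rcases (show (0 : ℝ) ≤ x.2 from hx).lt_or_eq with h | h
    · rw [if_pos h, PHint_eq_scaledPoisson hZ hfH hv.le x.1 h]
    · rw [if_neg h.symm.le.not_gt, ← hbd x.1 v hv, h]
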